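/- Let β ∈ K̄ and let u be an extension of v to K̄. Then the Zariski topology and the constructible topology induce the same subspace topology on 𝒱(β,•). -/

import Mathlib

open Filter Topology TopologicalSpace Set Polynomial

noncomputable section

namespace PaperPCZar

variable {K : Type*} [Field K]

/-- `expNeg γ = e^{-γ}` for `γ ∈ ℝ ∪ {∞}`, with `e^{-∞} = 0`. -/
def expNeg (γ : WithTop ℝ) : ℝ := WithTop.recTopCoe 0 (fun r => Real.exp (-r)) γ

/-- `v` is a rank-one (i.e. nontrivial, real-valued) valuation. -/
def IsRankOne (v : AddValuation K (WithTop ℝ)) : Prop := ∃ x : K, v x ≠ 0 ∧ v x ≠ ⊤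

/-- The value group `Γ_v` of `v`, as a subset of `ℝ`. -/
def valueGroup (v : AddValuation K (WithTop ℝ)) : Set ℝ := {r : ℝ | ∃ x : K, v x = (r : WithTop ℝ)}

/-- `ℚΓ_v = {q·γ : q ∈ ℚ, γ ∈ Γ_v}`, the divisible hull of the value group inside `ℝ`. -/
def QGamma (v : AddValuation K (WithTop ℝ)) : Set ℝ :=
  {r : ℝ | ∃ (q : ℚ) (γ : ℝ), γ ∈ valueGroup v ∧ r = q * γ}

/-- Order convergence of a sequence in `ℝ ∪ {∞}` to `γ`. -/
def OrdLim (f : ℕ → WithTop ℝ) (γ : WithTop ℝ) : Prop :=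
  (∀ a : WithTop ℝ, a < γ → ∀ᶠ n in atTop, a < f n) ∧
  (∀ b : WithTop ℝ, γ < b → ∀ᶠ n in atTop, f n < b)

/-- `s` is a pseudo-convergent sequence with respect to `v`. -/
def IsPC (v : AddValuation K (WithTop ℝ)) (s : ℕ → K) : Prop :=
  ∀ n, v (s (n + 1) - s n) < v (s (n + 2) - s (n + 1))

/-- `s` is a pseudo-divergent sequence with respect to `v`. -/
def IsPD (v : AddValuation K (WithTop ℝ)) (s : ℕ → K) : Prop :=
  ∀ n, v (s (n + 1) - s (n + 2)) < v (s n - s (n + 1))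

/-- `s` is a pseudo-stationary sequence with respect to `v`. -/
def IsPS (v : AddValuation K (WithTop ℝ)) (s : ℕ → K) : Prop :=
  ∀ n m n' m' : ℕ, n ≠ m → n' ≠ m' → v (s n - s m) = v (s n' - s m')

/-- `δ ∈ ℝ ∪ {∞}` is the breadth of the sequence `s`, i.e. `δ = lim_n v(s_{n+1} - s_n)`. -/
def IsBreadth (v : AddValuation K (WithTop ℝ)) (s : ℕ → K) (δ : WithTop ℝ) : Prop :=
  OrdLim (fun n => v (s (n + 1) - s n)) δ

/-- `α ∈ K` is a pseudo-limit of the pseudo-convergent sequence `s`. -/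
def IsPCLimit (v : AddValuation K (WithTop ℝ)) (s : ℕ → K) (α : K) : Prop :=
  ∀ n, v (α - s n) < v (α - s (n + 1))

/-- `α ∈ K` is a pseudo-limit of the pseudo-divergent sequence `s`. -/
def IsPDLimit (v : AddValuation K (WithTop ℝ)) (s : ℕ → K) (α : K) : Prop :=
  ∀ n, v (α - s (n + 1)) < v (α - s n)

/-- `β ∈ K̄` is a pseudo-limit of `s ⊆ K` with respect to an extension `u` of `v`
to the algebraic closure of `K`. -/
def IsPCLimitAC (u : AddValuation (AlgebraicClosure K) (WithTop ℝ)) (s : ℕ → K)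
    (β : AlgebraicClosure K) : Prop :=
  ∀ n, u (β - algebraMap K (AlgebraicClosure K) (s n)) <
    u (β - algebraMap K (AlgebraicClosure K) (s (n + 1)))

/-- `s` is of transcendental type: for every polynomial `f`, `v(f(s_n))` eventually
stabilizes. -/
def IsTranscendentalType (v : AddValuation K (WithTop ℝ)) (s : ℕ → K) : Prop :=
  ∀ f : Polynomial K, ∃ N, ∀ n ≥ N, v (f.eval (s n)) = v (f.eval (s N))

/-- The ultrametric distance `d(x,y) = e^{-v(x-y)}` on `K`. -/
def dK (v : AddValuation K (WithTop ℝ)) (x y : K) : ℝ := expNeg (v (x - y))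

/-- The set `V_E = {φ ∈ K(X) : φ(s_n) ∈ V for all but finitely many n}`. -/
def VESet (v : AddValuation K (WithTop ℝ)) (s : ℕ → K) : Set (RatFunc K) :=
  {φ : RatFunc K | ∀ᶠ n in atTop, 0 ≤ v (RatFunc.eval (RingHom.id K) (s n) φ)}

/-- `Zar(K(X)|V)`: the valuation subrings of `K(X)` containing (the image of) `V`. -/
def ZarSet (v : AddValuation K (WithTop ℝ)) : Set (ValuationSubring (RatFunc K)) :=
  {W | ∀ x : K, 0 ≤ v x → algebraMap K (RatFunc K) x ∈ W}

/-- `𝒱`: valuation subrings of `K(X)` of the form `V_E`, `E` pseudo-convergent. -/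
def VV (v : AddValuation K (WithTop ℝ)) : Set (ValuationSubring (RatFunc K)) :=
  {W | ∃ s : ℕ → K, IsPC v s ∧ (W : Set (RatFunc K)) = VESet v s}

/-- `𝒱(•,δ)`: those `V_E` with `E` pseudo-convergent of breadth `δ`. -/
def VVδ (v : AddValuation K (WithTop ℝ)) (δ : WithTop ℝ) : Set (ValuationSubring (RatFunc K)) :=
  {W | ∃ s : ℕ → K, IsPC v s ∧ IsBreadth v s δ ∧ (W : Set (RatFunc K)) = VESet v s}

/-- `𝒱_K(•,δ)`: those `V_E` with `E` pseudo-convergent of breadth `δ` having a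
pseudo-limit in `K`. -/
def VVKδ (v : AddValuation K (WithTop ℝ)) (δ : WithTop ℝ) : Set (ValuationSubring (RatFunc K)) :=
  {W | ∃ s : ℕ → K, IsPC v s ∧ IsBreadth v s δ ∧ (∃ α : K, IsPCLimit v s α) ∧
    (W : Set (RatFunc K)) = VESet v s}

/-- `𝒱(β,•)`: those `V_E` with `E` pseudo-convergent having `β ∈ K̄` as a pseudo-limit
with respect to `u`. -/
def VVβ (v : AddValuation K (WithTop ℝ)) (u : AddValuation (AlgebraicClosure K) (WithTop ℝ))
    (β : AlgebraicClosure K) : Set (ValuationSubring (RatFunc K)) :=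
  {W | ∃ s : ℕ → K, IsPC v s ∧ IsPCLimitAC u s β ∧ (W : Set (RatFunc K)) = VESet v s}

/-- `𝒱(β,•)` for a pseudo-limit `β ∈ K`. -/
def VVβK (v : AddValuation K (WithTop ℝ)) (β : K) : Set (ValuationSubring (RatFunc K)) :=
  {W | ∃ s : ℕ → K, IsPC v s ∧ IsPCLimit v s β ∧ (W : Set (RatFunc K)) = VESet v s}

/-- `𝒱_div`: those `V_E` with `E` pseudo-divergent. -/
def VVdiv (v : AddValuation K (WithTop ℝ)) : Set (ValuationSubring (RatFunc K)) :=
  {W | ∃ s : ℕ → K, IsPD v s ∧ (W : Set (RatFunc K)) = VESet v s}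

/-- `𝒱_div(•,δ)`: those `V_E` with `E` pseudo-divergent of breadth `δ`. -/
def VVdivδ (v : AddValuation K (WithTop ℝ)) (δ : WithTop ℝ) : Set (ValuationSubring (RatFunc K)) :=
  {W | ∃ s : ℕ → K, IsPD v s ∧ IsBreadth v s δ ∧ (W : Set (RatFunc K)) = VESet v s}

/-- `𝒱_div(β,•)`: those `V_E` with `E` pseudo-divergent having `β ∈ K` as a pseudo-limit. -/
def VVdivβ (v : AddValuation K (WithTop ℝ)) (β : K) : Set (ValuationSubring (RatFunc K)) :=
  {W | ∃ s : ℕ → K, IsPD v s ∧ IsPDLimit v s β ∧ (W : Set (RatFunc K)) = VESet v s}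

/-- `𝒱_stat(•,δ)`: those `V_E` with `E` pseudo-stationary of breadth `δ`. -/
def VVstatδ (v : AddValuation K (WithTop ℝ)) (δ : WithTop ℝ) :
    Set (ValuationSubring (RatFunc K)) :=
  {W | ∃ s : ℕ → K, (∀ n m : ℕ, n ≠ m → v (s n - s m) = δ) ∧
    (W : Set (RatFunc K)) = VESet v s}

/-- `𝒱_stat(β,•)`: those `V_E` with `E` pseudo-stationary having `β` as a pseudo-limit. -/
def VVstatβ (v : AddValuation K (WithTop ℝ)) (β : K) : Set (ValuationSubring (RatFunc K)) :=
  {W | ∃ (s : ℕ → K) (δ : WithTop ℝ), (∀ n m : ℕ, n ≠ m → v (s n - s m) = δ) ∧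
    (∀ n, δ ≤ v (β - s n)) ∧ (W : Set (RatFunc K)) = VESet v s}

/-- The Zariski topology on the valuation subrings of a field `L`, generated by the
sets `B(φ) = {W : φ ∈ W}`. -/
def zarTop (L : Type*) [Field L] : TopologicalSpace (ValuationSubring L) :=
  generateFrom {U | ∃ φ : L, U = {W : ValuationSubring L | φ ∈ W}}

/-- The constructible topology on the valuation subrings of a field `L`: the coarsest
topology in which all finite intersections `B(φ₁) ∩ ⋯ ∩ B(φ_k)` are open and closed. -/
def consTop (L : Type*) [Field L] : TopologicalSpace (ValuationSubring L) :=
  generateFrom {U | ∃ T : Finset L, U = {W : ValuationSubring L | ∀ φ ∈ T, φ ∈ W} ∨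
    U = {W : ValuationSubring L | ∀ φ ∈ T, φ ∈ W}ᶜ}

/-- The subspace Zariski topology on a set of valuation subrings. -/
def zarSub {L : Type*} [Field L] (S : Set (ValuationSubring L)) : TopologicalSpace ↥S :=
  (zarTop L).induced Subtype.val

/-- The subspace constructible topology on a set of valuation subrings. -/
def consSub {L : Type*} [Field L] (S : Set (ValuationSubring L)) : TopologicalSpace ↥S :=
  (consTop L).induced Subtype.val

/-- `d` is a metric on `X` inducing the topology `t`. -/
def MetrizedBy {X : Type*} (t : TopologicalSpace X) (d : X → X → ℝ) : Prop :=
  (∀ x y, d x y = d y x) ∧ (∀ x y, d x y = 0 ↔ x = y) ∧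
  (∀ x y z, d x z ≤ d x y + d y z) ∧
  t = generateFrom {U : Set X | ∃ (x : X) (ε : ℝ), 0 < ε ∧ U = {y | d x y < ε}}

/-- The topology `t` is metrizable. -/
def IsMetrizable {X : Type*} (t : TopologicalSpace X) : Prop := ∃ d, MetrizedBy t d

/-- The topology `t` is induced by an ultrametric. -/
def IsUltrametrizable {X : Type*} (t : TopologicalSpace X) : Prop :=
  ∃ d, MetrizedBy t d ∧ ∀ x y z, d x z ≤ max (d x y) (d y z)

/-- `dd` computes the distance `d_δ` on `𝒱(•,δ)`:
`d_δ(V_E, V_F) = lim_n max (d(s_n,t_n) - e^{-δ}) 0`. -/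
def IsDistδ (v : AddValuation K (WithTop ℝ)) (δ : WithTop ℝ)
    (dd : ValuationSubring (RatFunc K) → ValuationSubring (RatFunc K) → ℝ) : Prop :=
  ∀ (W W' : ValuationSubring (RatFunc K)) (s t : ℕ → K),
    IsPC v s → IsBreadth v s δ → (W : Set (RatFunc K)) = VESet v s →
    IsPC v t → IsBreadth v t δ → (W' : Set (RatFunc K)) = VESet v t →
    Tendsto (fun n => max (dK v (s n) (t n) - expNeg δ) 0) atTop (𝓝 (dd W W'))

/-- The `Λ`-upper limit topology on the interval `(-∞, b] ⊆ ℝ ∪ {∞}`, generated by the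
half-open intervals `(α, λ]` with `λ ∈ Λ ∪ {∞}`. -/
def upperTopWT (b : WithTop ℝ) (Λ : Set ℝ) : TopologicalSpace {γ : WithTop ℝ // γ ≤ b} :=
  generateFrom {U | ∃ α lam : WithTop ℝ, α ≤ b ∧
    (lam = ⊤ ∨ ∃ r ∈ Λ, lam = (r : WithTop ℝ)) ∧
    U = {γ : {γ : WithTop ℝ // γ ≤ b} | α < (γ : WithTop ℝ) ∧ (γ : WithTop ℝ) ≤ lam}}

/-- The `Λ`-upper limit topology on `(-∞, +∞] = ℝ ∪ {∞}`. -/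
def upperTopAll (Λ : Set ℝ) : TopologicalSpace (WithTop ℝ) :=
  generateFrom {U | ∃ α lam : WithTop ℝ,
    (lam = ⊤ ∨ ∃ r ∈ Λ, lam = (r : WithTop ℝ)) ∧
    U = {γ : WithTop ℝ | α < γ ∧ γ ≤ lam}}

/-- The `Λ`-upper limit topology on an interval `(a, b]` of `ℝ ∪ {±∞}`. -/
def upperTopE (a b : EReal) (Λ : Set ℝ) : TopologicalSpace {x : EReal // a < x ∧ x ≤ b} :=
  generateFrom {U | ∃ α lam : EReal, (a < α ∧ α ≤ b) ∧
    (lam = ⊤ ∨ ∃ r ∈ Λ, lam = (r : EReal)) ∧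
    U = {x : {x : EReal // a < x ∧ x ≤ b} | α < (x : EReal) ∧ (x : EReal) ≤ lam}}


/-- `𝒲`: the valuation domains of the valuations `w_E : φ ↦ lim_n v(φ(s_n))`, as `E`
ranges over the pseudo-convergent sequences for which `w_E` is a valuation. -/
def WW (v : AddValuation K (WithTop ℝ)) : Set (ValuationSubring (RatFunc K)) :=
  {W | ∃ (s : ℕ → K) (w : AddValuation (RatFunc K) (WithTop ℝ)), IsPC v s ∧
    (∀ φ : RatFunc K, OrdLim (fun n => v (RatFunc.eval (RingHom.id K) (s n) φ)) (w φ)) ∧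
    (W : Set (RatFunc K)) = {φ : RatFunc K | 0 ≤ w φ}}

/-!
Let `E = (s_n)` have pseudo-limit `β` and let `δ` be the limit of `u (β - s_n)`. Factoring over the
algebraic closure shows that, on some annulus `ρ < u (β - x) < δ`, the value of a nonzero `φ ∈ K(X)`
is `c + k * u (β - x)` with `k ∈ ℤ` and `c ∈ ℚΓ_v`. If `φ ∉ V_E`, there are two cases.

* The values of `φ` along `E` are eventually at most `-ε` for some `ε > 0`. As `v` has rank one,
  some `e` of positive value satisfies `e⁻¹ / φ ^ j ∈ V_E`, and a valuation ring `V_F` cannot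
  contain both `e⁻¹ / φ ^ j` and `φ`, since it does not contain `e⁻¹`.
* The values of `φ` along `E` tend to `0` from below. Then `δ = -c / k` lies in `ℚΓ_v`, and `φ` has
  negative value on an annulus. Since `δ ∈ ℚΓ_v`, it is a Zariski-open condition on `V_F` that `F`
  eventually lies in this annulus.

Either way `φ` is missing from all members of `𝒱(β,•)` in a Zariski neighbourhood of `V_E`.
-/

attribute [local instance] zarTop

section ConstructibleTopology

variable {L : Type*} [Field L]

theorem isOpen_setOf_mem (φ : L) : IsOpen {W : ValuationSubring L | φ ∈ W} :=
  isOpen_generateFrom_of_mem ⟨φ, rfl⟩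

theorem eventually_mem_of_mem {φ : L} {W : ValuationSubring L} (hφ : φ ∈ W) :
    ∀ᶠ W' in 𝓝 W, φ ∈ W' :=
  (isOpen_setOf_mem φ).mem_nhds hφ

theorem consTop_le_zarTop : consTop L ≤ zarTop L := by
  refine le_generateFrom ?_
  rintro _ ⟨φ, rfl⟩
  exact isOpen_generateFrom_of_mem ⟨{φ}, Or.inl (by simp)⟩

theorem zarSub_le_consSub_of_isOpen_notMem {S : Set (ValuationSubring L)}
    (h : ∀ φ : L, IsOpen {W : S | φ ∉ W.1}) : zarSub S ≤ consSub S := by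
  rw [consSub, consTop, induced_generateFrom_eq]
  refine le_generateFrom ?_
  rintro _ ⟨_, ⟨T, rfl | rfl⟩, rfl⟩
  · refine IsOpen.preimage continuous_subtype_val ?_
    simpa only [ofPred_forall] using isOpen_biInter_finset fun φ _ => isOpen_setOf_mem φ
  · have hunion : Subtype.val ⁻¹' {W : ValuationSubring L | ∀ φ ∈ T, φ ∈ W}ᶜ =
        ⋃ φ ∈ T, {W : S | φ ∉ W.1} := by ext; simp
    rw [hunion]
    exact isOpen_biUnion fun φ _ => h φ

theorem zarSub_eq_consSub_of_eventually_notMem {S : Set (ValuationSubring L)}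
    (h : ∀ φ : L, ∀ W ∈ S, φ ∉ W → ∀ᶠ W' in 𝓝[S] W, φ ∉ W') : zarSub S = consSub S := by
  refine le_antisymm (zarSub_le_consSub_of_isOpen_notMem fun φ => ?_)
    (induced_mono consTop_le_zarTop)
  exact isOpen_iff_eventually.2 fun W hW =>
    (eventually_nhds_subtype_iff S W (φ ∉ ·)).2 (h φ W W.2 hW)

end ConstructibleTopology

section Ultrametric

variable {R Γ₀ : Type*} [Ring R] [LinearOrderedAddCommMonoidWithTop Γ₀] (w : AddValuation R Γ₀)

theorem le_val_sub_trans {x y z : R} {γ : Γ₀} (hxy : γ ≤ w (x - y)) (hyz : γ ≤ w (y - z)) :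
    γ ≤ w (x - z) := by
  simpa using w.map_le_add hxy hyz

theorem lt_val_sub_trans {x y z : R} {γ : Γ₀} (hxy : γ < w (x - y)) (hyz : γ < w (y - z)) :
    γ < w (x - z) := by
  simpa using w.map_lt_add hxy hyz

theorem val_sub_eq_of_lt {x y z : R} (h : w (x - y) < w (y - z)) : w (x - z) = w (x - y) := by
  simpa using w.map_add_eq_of_lt_left h

theorem exists_ne_val_eq_of_sum_eq_zero {ι : Type*} {s : Finset ι} (hs : s.Nonempty) {f : ι → R}
    (hf : ∀ i ∈ s, w (f i) ≠ ⊤) (hsum : ∑ i ∈ s, f i = 0) :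
    ∃ i ∈ s, ∃ j ∈ s, i ≠ j ∧ w (f i) = w (f j) := by
  classical
  obtain ⟨i, hi, hmin⟩ := s.exists_min_image (fun i => w (f i)) hs
  by_contra! hne
  have hlt : w (f i) < w (∑ j ∈ s.erase i, f j) := by
    refine w.map_lt_sum (hf i hi) fun j hj => ?_
    obtain ⟨hji, hj⟩ := Finset.mem_erase.1 hj
    exact (hmin j hj).lt_of_ne (hne i hi j hj hji.symm)
  have hval := w.map_add_eq_of_lt_left hlt
  rw [Finset.add_sum_erase s f hi, hsum, w.map_zero] at hval
  exact hf i hi hval.symm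

end Ultrametric

section ValueGroup

variable (v : AddValuation K (WithTop ℝ))

theorem exists_val_eq_coe {x : K} (hx : x ≠ 0) : ∃ r : ℝ, v x = r :=
  (WithTop.ne_top_iff_exists.1 (v.ne_top_iff.2 hx)).imp fun _ => Eq.symm

theorem IsRankOne.exists_val_pos {v : AddValuation K (WithTop ℝ)} (hv : IsRankOne v) :
    ∃ (x : K) (r : ℝ), 0 < r ∧ v x = r := by
  obtain ⟨x, hx0, hxtop⟩ := hv
  obtain ⟨r, hr⟩ := WithTop.ne_top_iff_exists.1 hxtop
  have hr0 : r ≠ 0 := by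
    rintro rfl
    exact hx0 hr.symm
  rcases hr0.lt_or_gt with hneg | hpos
  · exact ⟨x⁻¹, -r, neg_pos.2 hneg, by simp [← hr]⟩
  · exact ⟨x, r, hpos, hr.symm⟩

/-- The value group `Γ_v` as a subgroup of `ℝ`. -/
def valueSubgroup : AddSubgroup ℝ where
  carrier := valueGroup v
  zero_mem' := ⟨1, by simp⟩
  add_mem' := by
    rintro _ _ ⟨x, hx⟩ ⟨y, hy⟩
    exact ⟨x * y, by simp [hx, hy]⟩
  neg_mem' := by
    rintro _ ⟨x, hx⟩
    exact ⟨x⁻¹, by simp [hx]⟩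

theorem exists_nat_mul_mem_valueGroup {v : AddValuation K (WithTop ℝ)} {r : ℝ}
    (hr : r ∈ QGamma v) : ∃ m : ℕ, 0 < m ∧ (m * r : ℝ) ∈ valueGroup v := by
  obtain ⟨q, γ, hγ, rfl⟩ := hr
  refine ⟨q.den, q.den_pos, ?_⟩
  have hq : (q.den * (q * γ) : ℝ) = q.num • γ := by
    rw [← mul_assoc, zsmul_eq_mul]
    exact_mod_cast congrArg (fun p : ℚ => (p * γ : ℝ)) q.den_mul_eq_num
  rw [hq]
  exact (valueSubgroup v).zsmul_mem hγ q.num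

theorem mem_QGamma_of_int_mul_mem {v : AddValuation K (WithTop ℝ)} {n : ℤ} (hn : n ≠ 0) {r : ℝ}
    (hr : (n * r : ℝ) ∈ valueGroup v) : r ∈ QGamma v := by
  refine ⟨(n : ℚ)⁻¹, n * r, hr, ?_⟩
  push_cast
  field_simp

/-- The divisible hull `ℚΓ_v` as a rational subspace of `ℝ`. -/
def divisibleHull : Submodule ℚ ℝ where
  carrier := QGamma v
  zero_mem' := ⟨0, 0, (valueSubgroup v).zero_mem, by simp⟩
  add_mem' := by
    intro a b ha hb
    obtain ⟨m, hm, hma⟩ := exists_nat_mul_mem_valueGroup ha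
    obtain ⟨n, hn, hnb⟩ := exists_nat_mul_mem_valueGroup hb
    refine mem_QGamma_of_int_mul_mem (n := m * n) (by positivity) ?_
    have hsplit : (((m * n : ℤ) : ℝ) * (a + b)) = n • (m * a : ℝ) + m • (n * b : ℝ) := by
      simp only [nsmul_eq_mul]
      push_cast
      ring
    rw [hsplit]
    exact (valueSubgroup v).add_mem ((valueSubgroup v).nsmul_mem hma n)
      ((valueSubgroup v).nsmul_mem hnb m)
  smul_mem' := by
    rintro p _ ⟨q, γ, hγ, rfl⟩
    exact ⟨p * q, γ, hγ, by rw [Rat.smul_def]; push_cast; ring⟩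

end ValueGroup

section Algebraic

variable {L : Type*} [Field L] [Algebra K L] {v : AddValuation K (WithTop ℝ)}
  {u : AddValuation L (WithTop ℝ)}

theorem val_mem_QGamma_of_isAlgebraic (hu : ∀ x : K, u (algebraMap K L x) = v x) {y : L}
    (hy : IsAlgebraic K y) {c : ℝ} (hc : u y = c) : c ∈ QGamma v := by
  obtain ⟨p, hp0, hp⟩ := hy
  have hcoeff : ∀ i ∈ p.support, ∃ a : ℝ, v (p.coeff i) = a := fun i hi =>
    exists_val_eq_coe v (mem_support_iff.1 hi)
  have hterm : ∀ i, ∀ a : ℝ, v (p.coeff i) = a → u (p.coeff i • y ^ i) = ((a + i * c : ℝ)) := by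
    intro i a ha
    rw [Algebra.smul_def, u.map_mul, u.map_pow, hu, ha, hc]
    simp [← WithTop.coe_nsmul]
  obtain ⟨i, hi, j, hj, hij, hval⟩ := exists_ne_val_eq_of_sum_eq_zero u
    (support_nonempty.2 hp0) (f := fun i => p.coeff i • y ^ i)
    (fun i hi => by
      obtain ⟨a, ha⟩ := hcoeff i hi
      simpa only [hterm i a ha] using WithTop.coe_ne_top)
    (by rwa [aeval_eq_smeval, smeval_eq_sum, sum_def] at hp)
  obtain ⟨a, ha⟩ := hcoeff i hi
  obtain ⟨b, hb⟩ := hcoeff j hj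
  rw [hterm i a ha, hterm j b hb, WithTop.coe_inj] at hval
  refine mem_QGamma_of_int_mul_mem (n := i - j) (by omega) ⟨p.coeff j / p.coeff i, ?_⟩
  rw [v.map_div, ha, hb, ← WithTop.LinearOrderedAddCommGroup.coe_sub, WithTop.coe_inj]
  push_cast
  linarith

end Algebraic

section EventuallyAffine

variable {L : Type*} [Field L] {v : AddValuation K (WithTop ℝ)}
  {u : AddValuation L (WithTop ℝ)} {β : L} {δ : WithTop ℝ} {F G : L → L}

variable (v u β δ) in
/-- `u (F x)` is an affine function `c + k * u (β - x)`, with `k ∈ ℤ` and `c ∈ ℚΓ_v`, on some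
annulus `ρ < u (β - x) < δ`. The outer value `δ` is meant to be the breadth of a pseudo-convergent
sequence with pseudo-limit `β`, whose terms eventually lie in every such annulus. -/
def IsEventuallyAffine (F : L → L) : Prop :=
  ∃ c ∈ QGamma v, ∃ k : ℤ, ∃ ρ < δ, ∀ x, ∀ r : ℝ, u (β - x) = r → ρ < r → r < δ →
    u (F x) = (c + k * r : ℝ)

theorem IsEventuallyAffine.mul (hF : IsEventuallyAffine v u β δ F)
    (hG : IsEventuallyAffine v u β δ G) : IsEventuallyAffine v u β δ fun x => F x * G x := by
  obtain ⟨c, hc, k, ρ, hρ, hF⟩ := hF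
  obtain ⟨c', hc', k', ρ', hρ', hG⟩ := hG
  refine ⟨c + c', (divisibleHull v).add_mem hc hc', k + k', max ρ ρ', max_lt hρ hρ',
    fun x r hx hr hrδ => ?_⟩
  obtain ⟨hr, hr'⟩ := max_lt_iff.1 hr
  rw [u.map_mul, hF x r hx hr hrδ, hG x r hx hr' hrδ, ← WithTop.coe_add, WithTop.coe_inj]
  push_cast
  ring

theorem IsEventuallyAffine.inv (hF : IsEventuallyAffine v u β δ F) :
    IsEventuallyAffine v u β δ fun x => (F x)⁻¹ := by
  obtain ⟨c, hc, k, ρ, hρ, hF⟩ := hF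
  refine ⟨-c, (divisibleHull v).neg_mem hc, -k, ρ, hρ, fun x r hx hr hrδ => ?_⟩
  rw [u.map_inv, hF x r hx hr hrδ, ← WithTop.LinearOrderedAddCommGroup.coe_neg,
    WithTop.coe_inj]
  push_cast
  ring

variable [Algebra K L] [Algebra.IsAlgebraic K L]

theorem exists_val_eq_coe_mem_QGamma (hu : ∀ x : K, u (algebraMap K L x) = v x) {a : L}
    (ha : a ≠ 0) : ∃ c ∈ QGamma v, u a = c := by
  obtain ⟨c, hc⟩ := exists_val_eq_coe u ha
  exact ⟨c, val_mem_QGamma_of_isAlgebraic hu (Algebra.IsAlgebraic.isAlgebraic a) hc, hc⟩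

theorem isEventuallyAffine_const (hu : ∀ x : K, u (algebraMap K L x) = v x) {a : L} (ha : a ≠ 0) :
    IsEventuallyAffine v u β δ fun _ => a := by
  obtain ⟨c, hc, hac⟩ := exists_val_eq_coe_mem_QGamma hu ha
  obtain ⟨ρ, hρ⟩ := exists_lt δ
  exact ⟨c, hc, 0, ρ, hρ, fun x r _ _ _ => by simp [hac]⟩

theorem isEventuallyAffine_sub_const (hu : ∀ x : K, u (algebraMap K L x) = v x) (a : L) :
    IsEventuallyAffine v u β δ fun x => x - a := by
  rcases le_or_gt δ (u (β - a)) with ha | ha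
  · obtain ⟨ρ, hρ⟩ := exists_lt δ
    refine ⟨0, (divisibleHull v).zero_mem, 1, ρ, hρ, fun x r hx _ hrδ => ?_⟩
    rw [← u.map_sub_swap] at hx
    rw [val_sub_eq_of_lt u (y := β) ((hx.trans_lt hrδ).trans_le ha), hx]
    simp
  · obtain ⟨c, hc, hac⟩ :=
      exists_val_eq_coe_mem_QGamma hu (u.ne_top_iff.1 (ha.trans_le le_top).ne)
    refine ⟨c, hc, 0, u (β - a), ha, fun x r hx hr _ => ?_⟩
    rw [← hx, ← u.map_sub_swap] at hr
    rw [u.map_sub_swap, val_sub_eq_of_lt u hr, u.map_sub_swap, hac]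
    simp

theorem isEventuallyAffine_eval (hu : ∀ x : K, u (algebraMap K L x) = v x) {f : L[X]}
    (hf : f ≠ 0) (hsplit : f.Splits) : IsEventuallyAffine v u β δ fun x => f.eval x := by
  have hroots (m : Multiset L) :
      IsEventuallyAffine v u β δ fun x => ((m.map fun a => X - C a).prod).eval x := by
    induction m using Multiset.induction_on with
    | empty => simpa using isEventuallyAffine_const hu one_ne_zero
    | cons a m ih => simpa using (isEventuallyAffine_sub_const hu a).mul ih
  rw [hsplit.eq_prod_roots]
  simpa only [eval_mul, eval_C] using
    (isEventuallyAffine_const hu (leadingCoeff_ne_zero.2 hf)).mul (hroots f.roots)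

theorem isEventuallyAffine_eval₂_div [IsAlgClosed L] (hu : ∀ x : K, u (algebraMap K L x) = v x)
    {p q : K[X]} (hp : p ≠ 0) (hq : q ≠ 0) : IsEventuallyAffine v u β δ fun x =>
      p.eval₂ (algebraMap K L) x / q.eval₂ (algebraMap K L) x := by
  have hpoly {f : K[X]} (hf : f ≠ 0) :
      IsEventuallyAffine v u β δ fun x => f.eval₂ (algebraMap K L) x := by
    simpa only [eval_map] using isEventuallyAffine_eval hu
      (Polynomial.map_ne_zero hf : f.map (algebraMap K L) ≠ 0) (IsAlgClosed.splits _)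
  simpa only [div_eq_mul_inv] using (hpoly hp).mul (hpoly hq).inv

variable (β δ) in
theorem exists_val_ratFunc_eval_eq_affine [IsAlgClosed L]
    (hu : ∀ x : K, u (algebraMap K L x) = v x) {φ : RatFunc K} (hφ : φ ≠ 0) :
    ∃ c ∈ QGamma v, ∃ k : ℤ, ∃ ρ < δ, ∀ x : K, ∀ r : ℝ, u (β - algebraMap K L x) = r →
      ρ < r → r < δ → v (φ.eval (RingHom.id K) x) = (c + k * r : ℝ) := by
  obtain ⟨c, hc, k, ρ, hρ, haffine⟩ := isEventuallyAffine_eval₂_div (β := β) (δ := δ) hu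
    (RatFunc.num_ne_zero hφ) φ.denom_ne_zero
  refine ⟨c, hc, k, ρ, hρ, fun x r hx hr hrδ => ?_⟩
  rw [← haffine _ r hx hr hrδ, ← hu]
  simp only [RatFunc.eval, map_div₀, hom_eval₂, RingHom.comp_id]

end EventuallyAffine

section EvaluationAlongSequence

variable {s : ℕ → K}

theorem eventually_eval_ne_zero (hs : Function.Injective s) {p : K[X]} (hp : p ≠ 0) :
    ∀ᶠ n in atTop, p.eval (s n) ≠ 0 := by
  rw [← Nat.cofinite_eq_atTop]
  exact ((p.finite_setOfPred_isRoot hp).preimage hs.injOn).compl_mem_cofinite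

theorem eventually_ratFunc_eval_mul (hs : Function.Injective s) (φ ψ : RatFunc K) :
    ∀ᶠ n in atTop, (φ * ψ).eval (RingHom.id K) (s n) =
      φ.eval (RingHom.id K) (s n) * ψ.eval (RingHom.id K) (s n) := by
  filter_upwards [eventually_eval_ne_zero hs φ.denom_ne_zero,
    eventually_eval_ne_zero hs ψ.denom_ne_zero] with n hφ hψ
  exact RatFunc.eval_mul _ _ hφ hψ

theorem eventually_ratFunc_eval_pow (hs : Function.Injective s) (φ : RatFunc K) (j : ℕ) :
    ∀ᶠ n in atTop, (φ ^ j).eval (RingHom.id K) (s n) = φ.eval (RingHom.id K) (s n) ^ j := by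
  induction j with
  | zero => simp
  | succ j ih =>
    filter_upwards [ih, eventually_ratFunc_eval_mul hs (φ ^ j) φ] with n hpow hmul
    rw [pow_succ, hmul, hpow, pow_succ]

theorem eventually_ratFunc_eval_ne_zero (hs : Function.Injective s) {φ : RatFunc K} (hφ : φ ≠ 0) :
    ∀ᶠ n in atTop, φ.eval (RingHom.id K) (s n) ≠ 0 := by
  filter_upwards [eventually_ratFunc_eval_mul hs φ φ⁻¹] with n hmul
  rw [mul_inv_cancel₀ hφ, RatFunc.eval_one] at hmul
  exact left_ne_zero_of_mul_eq_one hmul.symm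

variable {v : AddValuation K (WithTop ℝ)}

theorem C_mem_VESet_iff {a : K} : RatFunc.C a ∈ VESet v s ↔ 0 ≤ v a := by
  simp only [VESet, mem_ofPred_eq, RatFunc.eval_C, RingHom.id_apply, eventually_const]

theorem div_mem_VESet_iff (hs : Function.Injective s) (φ : RatFunc K) {ψ : RatFunc K}
    (hψ : ψ ≠ 0) : φ / ψ ∈ VESet v s ↔ ∀ᶠ n in atTop,
      v (ψ.eval (RingHom.id K) (s n)) ≤ v (φ.eval (RingHom.id K) (s n)) := by
  refine eventually_congr ?_
  filter_upwards [eventually_ratFunc_eval_mul hs (φ / ψ) ψ,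
    eventually_ratFunc_eval_ne_zero hs hψ] with n hmul hne
  rw [div_mul_cancel₀ φ hψ] at hmul
  obtain ⟨r, hr⟩ := exists_val_eq_coe v hne
  rw [hmul, v.map_mul, hr, ← WithTop.add_le_add_iff_right (WithTop.coe_ne_top (a := r)), zero_add]

theorem algebraMap_div_mem_VESet_iff (hs : Function.Injective s) (p : K[X]) {q : K[X]}
    (hq : q ≠ 0) : algebraMap K[X] (RatFunc K) p / algebraMap K[X] (RatFunc K) q ∈ VESet v s ↔
      ∀ᶠ n in atTop, v (q.eval (s n)) ≤ v (p.eval (s n)) := by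
  rw [div_mem_VESet_iff hs _ (RatFunc.algebraMap_ne_zero hq)]
  simp only [RatFunc.eval_algebraMap]
  rfl

end EvaluationAlongSequence

section Balls

theorem strictMono_nsmul_withTop_real {m : ℕ} (hm : 0 < m) :
    StrictMono fun x : WithTop ℝ => m • x := by
  intro x y hxy
  lift x to ℝ using hxy.ne_top
  obtain ⟨k, rfl⟩ := Nat.exists_eq_succ_of_ne_zero hm.ne'
  induction y with
  | top => simpa only [succ_nsmul, WithTop.add_top, ← WithTop.coe_nsmul, ← WithTop.coe_add]
      using WithTop.coe_lt_top _
  | coe y =>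
    simp only [← WithTop.coe_nsmul, WithTop.coe_lt_coe, nsmul_eq_mul] at hxy ⊢
    gcongr

variable {v : AddValuation K (WithTop ℝ)} {γ : ℝ}

theorem exists_mem_VESet_iff_le_val_sub (hγ : γ ∈ QGamma v) (a : K) :
    ∃ ψ : RatFunc K, ∀ s : ℕ → K, Function.Injective s →
      (ψ ∈ VESet v s ↔ ∀ᶠ n in atTop, γ ≤ v (s n - a)) := by
  obtain ⟨m, hm, d, hd⟩ := exists_nat_mul_mem_valueGroup hγ
  rw [← nsmul_eq_mul, WithTop.coe_nsmul] at hd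
  have hd0 : d ≠ 0 := by
    rw [← v.ne_top_iff, hd, ← WithTop.coe_nsmul]
    exact WithTop.coe_ne_top
  refine ⟨algebraMap K[X] (RatFunc K) ((X - C a) ^ m) / algebraMap K[X] (RatFunc K) (C d),
    fun s hs => ?_⟩
  rw [algebraMap_div_mem_VESet_iff hs _ (C_ne_zero.2 hd0)]
  simp only [eval_C, eval_pow, eval_sub, eval_X, v.map_pow, hd,
    (strictMono_nsmul_withTop_real hm).le_iff_le]

theorem exists_mem_VESet_iff_val_sub_le (hγ : γ ∈ QGamma v) (a : K) :
    ∃ ψ : RatFunc K, ∀ s : ℕ → K, Function.Injective s →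
      (ψ ∈ VESet v s ↔ ∀ᶠ n in atTop, v (s n - a) ≤ γ) := by
  obtain ⟨m, hm, d, hd⟩ := exists_nat_mul_mem_valueGroup hγ
  rw [← nsmul_eq_mul, WithTop.coe_nsmul] at hd
  refine ⟨algebraMap K[X] (RatFunc K) (C d) / algebraMap K[X] (RatFunc K) ((X - C a) ^ m),
    fun s hs => ?_⟩
  rw [algebraMap_div_mem_VESet_iff hs _ (pow_ne_zero m (X_sub_C_ne_zero a))]
  simp only [eval_C, eval_pow, eval_sub, eval_X, v.map_pow, hd,
    (strictMono_nsmul_withTop_real hm).le_iff_le]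

end Balls

section PseudoLimit

variable {v : AddValuation K (WithTop ℝ)} {u : AddValuation (AlgebraicClosure K) (WithTop ℝ)}
  {β : AlgebraicClosure K} {s : ℕ → K} {W : ValuationSubring (RatFunc K)}

theorem IsPCLimitAC.strictMono (hs : IsPCLimitAC u s β) :
    StrictMono fun n => u (β - algebraMap K (AlgebraicClosure K) (s n)) :=
  strictMono_nat_of_lt_succ hs

theorem IsPCLimitAC.injective (hs : IsPCLimitAC u s β) : Function.Injective s := fun _ _ h =>
  hs.strictMono.injective (congrArg (fun x => u (β - algebraMap K (AlgebraicClosure K) x)) h)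

theorem IsPCLimitAC.exists_val_eq_coe (hs : IsPCLimitAC u s β) (n : ℕ) :
    ∃ r : ℝ, u (β - algebraMap K (AlgebraicClosure K) (s n)) = r :=
  (WithTop.ne_top_iff_exists.1 (hs n).ne_top).imp fun _ => Eq.symm

theorem IsPCLimitAC.val_sub_eq (hs : IsPCLimitAC u s β)
    (hu : ∀ x : K, u (algebraMap K (AlgebraicClosure K) x) = v x) {m n : ℕ} (hmn : m < n) :
    v (s n - s m) = u (β - algebraMap K (AlgebraicClosure K) (s m)) := by
  have hlt := hs.strictMono hmn
  dsimp only at hlt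
  rw [u.map_sub_swap] at hlt
  rw [v.map_sub_swap, ← hu, map_sub, val_sub_eq_of_lt u hlt, u.map_sub_swap]

theorem IsPCLimitAC.val_sub_lt (hs : IsPCLimitAC u s β) {δ : WithTop ℝ}
    (hδ : IsLUB (range fun n => u (β - algebraMap K (AlgebraicClosure K) (s n))) δ) (n : ℕ) :
    u (β - algebraMap K (AlgebraicClosure K) (s n)) < δ :=
  (hs n).trans_le (hδ.1 (mem_range_self (n + 1)))

theorem IsPCLimitAC.eventually_lt_val_sub (hs : IsPCLimitAC u s β) {δ ρ : WithTop ℝ}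
    (hδ : IsLUB (range fun n => u (β - algebraMap K (AlgebraicClosure K) (s n))) δ) (hρ : ρ < δ) :
    ∀ᶠ n in atTop, ρ < u (β - algebraMap K (AlgebraicClosure K) (s n)) := by
  obtain ⟨_, ⟨N, rfl⟩, hN, -⟩ := hδ.exists_between hρ
  exact (eventually_ge_atTop N).mono fun n hn => hN.trans_le (hs.strictMono.monotone hn)

theorem eventually_nhds_lt_val_sub
    (hu : ∀ x : K, u (algebraMap K (AlgebraicClosure K) x) = v x) (hs : IsPCLimitAC u s β)
    (hW : (W : Set (RatFunc K)) = VESet v s) (N : ℕ) :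
    ∀ᶠ W' : ValuationSubring (RatFunc K) in 𝓝 W, ∀ t,
      IsPCLimitAC u t β → (W' : Set (RatFunc K)) = VESet v t →
      ∀ᶠ n in atTop, u (β - algebraMap K (AlgebraicClosure K) (s N)) <
        u (β - algebraMap K (AlgebraicClosure K) (t n)) := by
  obtain ⟨r, hr⟩ := hs.exists_val_eq_coe N
  have hrΓ : r ∈ QGamma v :=
    ⟨1, r, ⟨s (N + 1) - s N, (hs.val_sub_eq hu N.lt_succ_self).trans hr⟩, by simp⟩
  obtain ⟨ψ, hψ⟩ := exists_mem_VESet_iff_le_val_sub hrΓ (s N)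
  have hψW : ψ ∈ W := hW.superset <| (hψ s hs.injective).2 <|
    (eventually_gt_atTop N).mono fun n hn => (hr.symm.trans (hs.val_sub_eq hu hn).symm).le
  filter_upwards [eventually_mem_of_mem hψW] with W' hψW' t ht hWt
  obtain ⟨m, hm⟩ := ((hψ t ht.injective).1 (hWt.subset hψW')).exists
  have hle : (r : WithTop ℝ) ≤ u (β - algebraMap K (AlgebraicClosure K) (t m)) := by
    refine le_val_sub_trans u hr.ge ?_
    rwa [u.map_sub_swap, ← map_sub, hu]
  filter_upwards [eventually_gt_atTop m] with n hn
  exact (hr.le.trans hle).trans_lt (ht.strictMono hn)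

theorem eventually_nhds_val_sub_lt
    (hu : ∀ x : K, u (algebraMap K (AlgebraicClosure K) x) = v x)
    (hs : IsPCLimitAC u s β) (hW : (W : Set (RatFunc K)) = VESet v s) {δ : ℝ} (hδ : δ ∈ QGamma v)
    (hsδ : ∀ n, u (β - algebraMap K (AlgebraicClosure K) (s n)) < δ) :
    ∀ᶠ W' : ValuationSubring (RatFunc K) in 𝓝 W, ∀ t,
      IsPCLimitAC u t β → (W' : Set (RatFunc K)) = VESet v t →
      ∀ᶠ n in atTop, u (β - algebraMap K (AlgebraicClosure K) (t n)) < δ := by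
  suffices hle : ∀ᶠ W' : ValuationSubring (RatFunc K) in 𝓝 W, ∀ t,
      IsPCLimitAC u t β → (W' : Set (RatFunc K)) = VESet v t →
      ∀ᶠ n in atTop, u (β - algebraMap K (AlgebraicClosure K) (t n)) ≤ δ by
    filter_upwards [hle] with W' hle t ht hWt
    filter_upwards [(tendsto_add_atTop_nat 1).eventually (hle t ht hWt)] with n hn
    exact (ht n).trans_le hn
  by_cases hball : ∃ a : K, δ < u (β - algebraMap K (AlgebraicClosure K) a)
  · obtain ⟨a, ha⟩ := hball
    obtain ⟨ψ, hψ⟩ := exists_mem_VESet_iff_val_sub_le hδ a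
    have hψW : ψ ∈ W := by
      refine hW.superset <| (hψ s hs.injective).2 <| Eventually.of_forall fun n => ?_
      have hn := hsδ n
      rw [u.map_sub_swap] at hn
      rw [← hu, map_sub, val_sub_eq_of_lt u (hn.trans ha)]
      exact hn.le
    filter_upwards [eventually_mem_of_mem hψW] with W' hψW' t ht hWt
    filter_upwards [(hψ t ht.injective).1 (hWt.subset hψW')] with n hn
    by_contra! hlt
    rw [u.map_sub_swap] at hlt
    have hclose := lt_val_sub_trans u hlt ha
    rw [← map_sub, hu] at hclose
    exact hn.not_gt hclose
  -- No point of `K` is closer to `β` than `δ`, so the bound holds for every sequence in `K`.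
  · push Not at hball
    exact Eventually.of_forall fun _ t _ _ => Eventually.of_forall fun n => hball (t n)

theorem eventually_nhds_notMem_of_val_eval_neg
    (hu : ∀ x : K, u (algebraMap K (AlgebraicClosure K) x) = v x) (hs : IsPCLimitAC u s β)
    (hW : (W : Set (RatFunc K)) = VESet v s) {δ : ℝ} (hδ : δ ∈ QGamma v)
    (hLUB : IsLUB (range fun n => u (β - algebraMap K (AlgebraicClosure K) (s n))) δ)
    {ρ : WithTop ℝ} (hρ : ρ < δ) {φ : RatFunc K}
    (hφ : ∀ x : K, ρ < u (β - algebraMap K (AlgebraicClosure K) x) →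
      u (β - algebraMap K (AlgebraicClosure K) x) < δ → v (φ.eval (RingHom.id K) x) < 0) :
    ∀ᶠ W' : ValuationSubring (RatFunc K) in 𝓝 W, ∀ t,
      IsPCLimitAC u t β → (W' : Set (RatFunc K)) = VESet v t → φ ∉ W' := by
  obtain ⟨N, hN⟩ := (hs.eventually_lt_val_sub hLUB hρ).exists
  filter_upwards [eventually_nhds_lt_val_sub hu hs hW N,
    eventually_nhds_val_sub_lt hu hs hW hδ (hs.val_sub_lt hLUB)] with W' hlower hupper t ht hWt hφW'
  obtain ⟨n, hlow, hup, hval⟩ := ((hlower t ht hWt).and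
    ((hupper t ht hWt).and (hWt.subset hφW'))).exists
  exact hval.not_gt (hφ (t n) (hN.trans hlow) hup)

theorem eventually_nhds_notMem_of_val_eval_le (hv : IsRankOne v) (hs : Function.Injective s)
    (hW : (W : Set (RatFunc K)) = VESet v s) {φ : RatFunc K} {ε : ℝ} (hε : 0 < ε)
    (hφ : ∀ᶠ n in atTop, v (φ.eval (RingHom.id K) (s n)) ≤ (-ε : ℝ)) :
    ∀ᶠ W' : ValuationSubring (RatFunc K) in 𝓝 W, ∀ t,
      (W' : Set (RatFunc K)) = VESet v t → φ ∉ W' := by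
  obtain ⟨e, r, hr, he⟩ := hv.exists_val_pos
  have heinv : v e⁻¹ = (-r : ℝ) := by
    rw [v.map_inv, he, WithTop.LinearOrderedAddCommGroup.coe_neg]
  obtain ⟨j, hj⟩ := Archimedean.arch r hε
  have hφ0 : φ ≠ 0 := by
    rintro rfl
    simpa using hφ.exists
  have hψW : RatFunc.C e⁻¹ / φ ^ j ∈ W := by
    refine hW.superset <| (div_mem_VESet_iff hs _ (pow_ne_zero j hφ0)).2 ?_
    filter_upwards [hφ, eventually_ratFunc_eval_pow hs φ j] with n hn hpow
    rw [hpow, v.map_pow, RatFunc.eval_C, RingHom.id_apply, heinv]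
    refine (nsmul_le_nsmul_right hn j).trans ?_
    rw [← WithTop.coe_nsmul, WithTop.coe_le_coe, smul_neg]
    exact neg_le_neg hj
  filter_upwards [eventually_mem_of_mem hψW] with W' hψW' t hWt hφW'
  have hC := W'.mul_mem _ _ hψW' (pow_mem hφW' j)
  rw [div_mul_cancel₀ _ (pow_ne_zero j hφ0)] at hC
  have hle := C_mem_VESet_iff.1 (hWt.subset hC)
  rw [heinv] at hle
  exact (neg_neg_of_pos hr).not_ge (WithTop.coe_le_coe.1 hle)

end PseudoLimit

theorem eventually_affine_le_neg_or_isLUB_eq {r : ℕ → ℝ} (hr : Monotone r) {δ : WithTop ℝ}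
    (hδ : IsLUB (range fun n => (r n : WithTop ℝ)) δ) {c k : ℝ}
    (hneg : ∃ᶠ n in atTop, c + k * r n < 0) :
    (∃ ε > 0, ∀ᶠ n in atTop, c + k * r n ≤ -ε) ∨ (0 < k ∧ δ = (-c / k : ℝ)) := by
  rcases le_or_gt k 0 with hk | hk
  · obtain ⟨m, hm⟩ := hneg.exists
    refine Or.inl ⟨-(c + k * r m), neg_pos.2 hm, ?_⟩
    filter_upwards [eventually_ge_atTop m] with n hn
    linarith [mul_le_mul_of_nonpos_left (hr hn) hk]
  have hle : δ ≤ (-c / k : ℝ) := by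
    refine hδ.2 ?_
    rintro _ ⟨m, rfl⟩
    obtain ⟨n, hn, hmn⟩ := (hneg.and_eventually (eventually_ge_atTop m)).exists
    rw [WithTop.coe_le_coe, le_div_iff₀' hk]
    linarith [mul_le_mul_of_nonneg_left (hr hmn) hk.le]
  rcases hle.eq_or_lt with heq | hlt
  · exact Or.inr ⟨hk, heq⟩
  lift δ to ℝ using hlt.ne_top
  rw [WithTop.coe_lt_coe, lt_div_iff₀' hk] at hlt
  refine Or.inl ⟨-(c + k * δ), by linarith, Eventually.of_forall fun n => ?_⟩
  have hn : r n ≤ δ := WithTop.coe_le_coe.1 (hδ.1 (mem_range_self n))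
  linarith [mul_le_mul_of_nonneg_left hn hk.le]

theorem eventually_val_eval_le_or_annulus_val_eval_neg {v : AddValuation K (WithTop ℝ)}
    {u : AddValuation (AlgebraicClosure K) (WithTop ℝ)}
    (hu : ∀ x : K, u (algebraMap K (AlgebraicClosure K) x) = v x) {β : AlgebraicClosure K}
    {s : ℕ → K} (hs : IsPCLimitAC u s β) {φ : RatFunc K}
    (hφ : ∃ᶠ n in atTop, v (φ.eval (RingHom.id K) (s n)) < 0) :
    (∃ ε > 0, ∀ᶠ n in atTop, v (φ.eval (RingHom.id K) (s n)) ≤ (-ε : ℝ)) ∨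
      ∃ δ ∈ QGamma v,
        IsLUB (range fun n => u (β - algebraMap K (AlgebraicClosure K) (s n))) (δ : ℝ) ∧
        ∃ ρ < (δ : WithTop ℝ), ∀ x : K, ρ < u (β - algebraMap K (AlgebraicClosure K) x) →
          u (β - algebraMap K (AlgebraicClosure K) x) < δ → v (φ.eval (RingHom.id K) x) < 0 := by
  choose r hr using hs.exists_val_eq_coe
  have hr_mono : Monotone r := fun m n hmn => by
    simpa only [hr, WithTop.coe_le_coe] using hs.strictMono.monotone hmn
  obtain ⟨δ, hδ⟩ : ∃ δ, IsLUB (range fun n => u (β - algebraMap K (AlgebraicClosure K) (s n))) δ :=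
    ⟨_, isLUB_ciSup (OrderTop.bddAbove _)⟩
  have hφ0 : φ ≠ 0 := by
    rintro rfl
    simpa using hφ.exists
  obtain ⟨c, hc, k, ρ, hρ, hval⟩ := exists_val_ratFunc_eval_eq_affine β δ hu hφ0
  have hval_s : ∀ᶠ n in atTop, v (φ.eval (RingHom.id K) (s n)) = (c + k * r n : ℝ) := by
    filter_upwards [hs.eventually_lt_val_sub hδ hρ] with n hn
    exact hval _ _ (hr n) (hr n ▸ hn) (hr n ▸ hs.val_sub_lt hδ n)
  have hneg : ∃ᶠ n in atTop, c + k * r n < 0 :=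
    (hφ.and_eventually hval_s).mono fun n ⟨hlt, hn⟩ => WithTop.coe_lt_coe.1 (hn.symm.trans_lt hlt)
  rcases eventually_affine_le_neg_or_isLUB_eq hr_mono (by simpa only [hr] using hδ) hneg with
    ⟨ε, hε, hle⟩ | ⟨hk, rfl⟩
  · refine Or.inl ⟨ε, hε, ?_⟩
    filter_upwards [hle, hval_s] with n hn hvn
    exact hvn.trans_le (WithTop.coe_le_coe.2 hn)
  · have hsmul : -c / k = (-(k : ℚ)⁻¹) • c := by
      rw [Rat.smul_def]
      push_cast
      ring
    refine Or.inr ⟨-c / k, hsmul ▸ (divisibleHull v).smul_mem _ hc, hδ, ρ, hρ, fun x hρx hxδ => ?_⟩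
    obtain ⟨a, ha⟩ := WithTop.ne_top_iff_exists.1 hxδ.ne_top
    rw [← ha] at hρx hxδ
    rw [hval x a ha.symm hρx hxδ, ← WithTop.coe_zero, WithTop.coe_lt_coe]
    rw [WithTop.coe_lt_coe, lt_div_iff₀' hk] at hxδ
    linarith

theorem eventually_nhdsWithin_VVβ_notMem {v : AddValuation K (WithTop ℝ)} (hv : IsRankOne v)
    {u : AddValuation (AlgebraicClosure K) (WithTop ℝ)}
    (hu : ∀ x : K, u (algebraMap K (AlgebraicClosure K) x) = v x) {β : AlgebraicClosure K}
    {W : ValuationSubring (RatFunc K)} (hW : W ∈ VVβ v u β) {φ : RatFunc K} (hφ : φ ∉ W) :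
    ∀ᶠ W' in 𝓝[VVβ v u β] W, φ ∉ W' := by
  obtain ⟨s, -, hs, hWs⟩ := hW
  have hneg : ∃ᶠ n in atTop, v (φ.eval (RingHom.id K) (s n)) < 0 := by
    simpa only [not_le] using not_eventually.1 fun h => hφ (hWs.superset h)
  rw [eventually_nhdsWithin_iff]
  rcases eventually_val_eval_le_or_annulus_val_eval_neg hu hs hneg with
    ⟨ε, hε, hle⟩ | ⟨δ, hδ, hLUB, ρ, hρ, hannulus⟩
  · filter_upwards [eventually_nhds_notMem_of_val_eval_le hv hs.injective hWs hε hle]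
    rintro W' hW' ⟨t, -, -, hWt⟩
    exact hW' t hWt
  · filter_upwards [eventually_nhds_notMem_of_val_eval_neg hu hs hWs hδ hLUB hρ hannulus]
    rintro W' hW' ⟨t, -, ht, hWt⟩
    exact hW' t ht hWt

/-- The Zariski and constructible topologies agree on `𝒱(β,•)`. -/
theorem statement11 (v : AddValuation K (WithTop ℝ)) (hv : IsRankOne v)
    (u : AddValuation (AlgebraicClosure K) (WithTop ℝ))
    (hu : ∀ x : K, u (algebraMap K (AlgebraicClosure K) x) = v x)
    (β : AlgebraicClosure K) :
    zarSub (VVβ v u β) = consSub (VVβ v u β) :=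
  zarSub_eq_consSub_of_eventually_notMem fun _ _ hW hφ =>
    eventually_nhdsWithin_VVβ_notMem hv hu hW hφ

end PaperPCZar
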